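/- For every $\delta>0$ and every $N>0$ there exists a constant $b_\delta>0$ (depending only on $\delta$ and $N$) such that for every sequence of occupation numbers $f:\mathbb{N}_{\ge 1}\to[0,1]$ with $\sum_{k\ge 1} f_k = N$ and $\sum_{k\ge 1} f_k\,k^{2/3} < \infty$, one has $\sum_{k\ge 1}\Big(f_k\ln f_k + (1-f_k)\ln(1-f_k)\Big) \;\ge\; -\,\delta\sum_{k\ge 1} f_k\,k^{2/3} \;-\; b_\delta$. -/

import Mathlib

open scoped ENNReal

/-!
Young's inequality for the conjugate functions `x * log x - x` and `exp` gives, for `0 ≤ x ≤ 1` and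
every real `a`, the bound `binEntropy x ≤ x * a + exp (-a)`. With `x = f k` and
`a = δ * k ^ (2 / 3)`, summing over `k` bounds the entropy by `δ` times the kinetic term plus the
constant `∑ exp (-(δ * k ^ (2 / 3)))`, which is finite because stretched exponentials are summable.
-/

open Asymptotics Filter Real

theorem negMulLog_le_mul_add_exp_neg_sub {x : ℝ} (hx : 0 ≤ x) (a : ℝ) :
    negMulLog x ≤ x * a + exp (-a) - x := by
  have hexp : exp (-a) * exp a = 1 := by rw [← exp_add, neg_add_cancel, exp_zero]
  have hscale : exp (-a) * (x * exp a) = x := by rw [mul_left_comm, hexp, mul_one]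
  calc
    negMulLog x = negMulLog (exp (-a) * (x * exp a)) := by rw [hscale]
    _ = exp (-a) * (x * exp a) * a + exp (-a) * negMulLog (x * exp a) := by
      rw [negMulLog_mul, negMulLog, log_exp]
      ring
    _ ≤ exp (-a) * (x * exp a) * a + exp (-a) * (1 - x * exp a) := by
      gcongr
      exact negMulLog_le_one_sub_self (by positivity)
    _ = x * a + exp (-a) - x := by rw [mul_sub, mul_one, hscale, add_sub_assoc]

theorem binEntropy_le_mul_add_exp_neg {p : ℝ} (hp₀ : 0 ≤ p) (hp₁ : p ≤ 1) (a : ℝ) :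
    binEntropy p ≤ p * a + exp (-a) := by
  have hocc := negMulLog_le_mul_add_exp_neg_sub hp₀ a
  have hvac := negMulLog_le_one_sub_self (sub_nonneg.2 hp₁)
  rw [binEntropy_eq_negMulLog_add_negMulLog_one_sub]
  linarith

theorem binEntropy_eq_neg_mul_log_add (p : ℝ) :
    binEntropy p = -(p * log p + (1 - p) * log (1 - p)) := by
  rw [binEntropy_eq_negMulLog_add_negMulLog_one_sub, negMulLog, negMulLog]
  ring

theorem summable_exp_neg_mul_rpow {c s : ℝ} (hc : 0 < c) (hs : 0 < s) :
    Summable fun n : ℕ ↦ exp (-(c * (n : ℝ) ^ s)) := by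
  have hpow : Tendsto (fun n : ℕ ↦ (n : ℝ) ^ s) atTop atTop :=
    (tendsto_rpow_atTop hs).comp tendsto_natCast_atTop_atTop
  have hdecay : (fun n : ℕ ↦ exp (-c * (n : ℝ) ^ s)) =o[atTop]
      fun n : ℕ ↦ ((n : ℝ) ^ s) ^ (-2 / s) :=
    (isLittleO_exp_neg_mul_rpow_atTop hc (-2 / s)).comp_tendsto hpow
  have hsum : Summable fun n : ℕ ↦ ((n : ℝ) ^ s) ^ (-2 / s) := by
    simp only [← rpow_mul (Nat.cast_nonneg _), mul_div_cancel₀ _ hs.ne']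
    exact summable_nat_rpow.2 (by norm_num)
  simpa only [neg_mul] using summable_of_isBigO_nat hsum hdecay.isBigO

theorem stmt4_general {ι : Type*} {δ : ℝ} {ε f : ι → ℝ}
    (hε : Summable fun k ↦ exp (-(δ * ε k))) (hf₀ : ∀ k, 0 ≤ f k) (hf₁ : ∀ k, f k ≤ 1)
    (hfε : Summable fun k ↦ f k * ε k) :
    ∑' k, ENNReal.ofReal (-(f k * log (f k) + (1 - f k) * log (1 - f k))) ≤
      ENNReal.ofReal (δ * ∑' k, f k * ε k + ∑' k, exp (-(δ * ε k))) := by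
  have hbound (k : ι) : binEntropy (f k) ≤ δ * (f k * ε k) + exp (-(δ * ε k)) := by
    simpa only [mul_left_comm] using binEntropy_le_mul_add_exp_neg (hf₀ k) (hf₁ k) (δ * ε k)
  have hsum : Summable fun k ↦ δ * (f k * ε k) + exp (-(δ * ε k)) := (hfε.mul_left δ).add hε
  simp only [← binEntropy_eq_neg_mul_log_add]
  calc
    ∑' k, ENNReal.ofReal (binEntropy (f k))
        ≤ ∑' k, ENNReal.ofReal (δ * (f k * ε k) + exp (-(δ * ε k))) :=
      ENNReal.tsum_le_tsum fun k ↦ ENNReal.ofReal_le_ofReal (hbound k)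
    _ = ENNReal.ofReal (∑' k, (δ * (f k * ε k) + exp (-(δ * ε k)))) :=
      (ENNReal.ofReal_tsum_of_nonneg
        (fun k ↦ (binEntropy_nonneg (hf₀ k) (hf₁ k)).trans (hbound k)) hsum).symm
    _ = ENNReal.ofReal (δ * ∑' k, f k * ε k + ∑' k, exp (-(δ * ε k))) := by
      rw [(hfε.mul_left δ).tsum_add hε, tsum_mul_left]

/-- Coercivity of the entropy against the kinetic term: for every `δ > 0` and `N > 0`
there is `b_δ > 0` such that for every sequence of occupation numbers
`f : ℕ≥1 → [0,1]` (indexed by `k : ℕ` via `k+1`) with `∑_{k≥1} f k = N` and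
`∑_{k≥1} f k * k^(2/3) < ∞`, one has
`∑_k (f k ln (f k) + (1 - f k) ln (1 - f k)) ≥ -δ ∑_k f k k^(2/3) - b_δ`.
The left-hand side has nonpositive terms; the inequality is stated equivalently as an
upper bound in `[0,∞]` on the sum of the negated terms. -/
theorem stmt4 (δ N : ℝ) (hδ : 0 < δ) (hN : 0 < N) :
    ∃ b : ℝ, 0 < b ∧
      ∀ f : ℕ → ℝ, (∀ k, 0 ≤ f k) → (∀ k, f k ≤ 1) →
        HasSum f N →
        Summable (fun k : ℕ => f k * ((k + 1 : ℕ) : ℝ) ^ (2 / 3 : ℝ)) →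
        (∑' k : ℕ,
            ENNReal.ofReal (-(f k * Real.log (f k) + (1 - f k) * Real.log (1 - f k)))) ≤
          ENNReal.ofReal
            (δ * (∑' k : ℕ, f k * ((k + 1 : ℕ) : ℝ) ^ (2 / 3 : ℝ)) + b) := by
  have hs := (summable_nat_add_iff 1).2 (summable_exp_neg_mul_rpow hδ (s := 2 / 3) (by norm_num))
  exact ⟨_, hs.tsum_pos (fun _ ↦ (exp_pos _).le) 0 (exp_pos _),
    fun _ hf₀ hf₁ _ hfε ↦ stmt4_general hs hf₀ hf₁ hfε⟩
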